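/- Let d₁, d₂ be positive integers with d₁d₂ ≥ 3, N = d₁d₂, and let U be Haar-distributed on U(N). With ρ₀, ρ₁, ρ₂ the partial traces over the second factor of the projectors onto the 0-th, 1-st and 2-nd columns of U, one has E[Tr(ρ₀²) · Tr(ρ₁ρ₂)] = (d₂²−1)·(d₁(d₁+d₂)(d₁d₂(d₁d₂+4)+2) − 2) / (d₁d₂(d₁d₂−1)(d₁d₂+1)(d₁d₂+2)(d₁d₂+3)). -/

import Mathlib

/-!
The argument replaces the Weingarten calculus by infinitesimal invariance. Polynomials in the
entries of a matrix and in their conjugates form a polynomial ring `EntryPoly`, on which expectation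
is a linear functional `expect μ`. Differentiating the invariance of Haar measure under
`U ↦ exp(tA) U` and `U ↦ U exp(tA)` at `t = 0` shows that the derivations `leftDer A` and
`rightDer A` have mean zero, first for skew-Hermitian `A` and then, by complex linearity, for every
matrix `A` (`expect_leftDer`, `expect_rightDer`).

Write `N = d₁d₂`, let `X_c` be the `c`-th column reshaped as a `d₁ × d₂` matrix and `Y_c` its
conjugate transpose, so that `ρ_c = X_c Y_c` is the reduced state in question and `σ_c = Y_c X_c` is,
up to transposition, the other partial trace.

* Left invariance gives integration by parts on the unit sphere (`expect_trace_mul_colY`). For the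
  purity `p = Tr ρ_c²` it yields `(N+1) E[p] = d₁ + d₂`,
  `(N+2) E[Tr ρ_c³] = (d₁+d₂) E[p] + 1` and `(N+3) E[p²] = (d₁+d₂) E[p] + 2 E[Tr ρ_c³]`
  (`expect_purity`, `expect_trace_cube`, `expect_purity_sq`).
* Right rotations among the columns other than the `0`-th preserve `p = Tr ρ₀²`. They relate
  `E[p Tr ρ_e ρ_v]` for the various `e, v ≠ 0` to one another and, at `e = v`, to the correlation
  `E[p Tr σ_u σ_v]` (`expect_rho_rho`, `expect_sigma_sigma`). Together with the completeness
  relations `∑ₑ ρₑ = d₂ • 1` and `∑ₑ σₑ = d₁ • 1` this is a linear system that expresses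
  `E[p Tr ρ₁ρ₂]` through `E[p]` and `E[p²]` (`expect_mixed`).

Substituting the moments gives the closed formula.
-/

open Matrix MeasureTheory

instance matrixMeasurableSpace {m n α : Type*} [MeasurableSpace α] :
    MeasurableSpace (Matrix m n α) :=
  inferInstanceAs (MeasurableSpace (m → n → α))

/-- For a unitary matrix `U` of size `d₁d₂` and a column index `i`, `rho U i` is the
partial trace over the second tensor factor of the rank-one projector onto the `i`-th
column of `U`: `(rho U i) a b = ∑ k, U_{(a,k),i} * conj (U_{(b,k),i})`. -/
noncomputable def rho {d₁ d₂ : ℕ} (U : Matrix.unitaryGroup (Fin (d₁ * d₂)) ℂ)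
    (i : Fin (d₁ * d₂)) : Matrix (Fin d₁) (Fin d₁) ℂ :=
  Matrix.of fun a b => ∑ k : Fin d₂,
    (U : Matrix (Fin (d₁ * d₂)) (Fin (d₁ * d₂)) ℂ) (finProdFinEquiv (a, k)) i *
      (starRingEnd ℂ) ((U : Matrix (Fin (d₁ * d₂)) (Fin (d₁ * d₂)) ℂ) (finProdFinEquiv (b, k)) i)

/-! ### Infinitesimal invariance of Haar measure on polynomials -/

section Analytic

variable {n : Type*} [Fintype n] [DecidableEq n]

instance unitaryGroup_compactSpace : CompactSpace (Matrix.unitaryGroup n ℂ) := by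
  have hc : IsClosed {M : Matrix n n ℂ | M ∈ Matrix.unitaryGroup n ℂ} := by
    simp only [Matrix.mem_unitaryGroup_iff]
    exact isClosed_eq (by fun_prop) continuous_const
  have hK : IsCompact (Set.univ.pi fun _ : n => Set.univ.pi fun _ : n =>
      Metric.closedBall (0 : ℂ) 1) :=
    isCompact_univ_pi fun _ => isCompact_univ_pi fun _ => isCompact_closedBall _ _
  have hs : {M : Matrix n n ℂ | M ∈ Matrix.unitaryGroup n ℂ} ⊆
      (Set.univ.pi fun _ : n => Set.univ.pi fun _ : n => Metric.closedBall (0 : ℂ) 1) := by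
    intro M hM i _ j _
    simpa using entry_norm_bound_of_unitary hM i j
  exact isCompact_iff_compactSpace.mp (IsCompact.of_isClosed_subset hK hc hs)

instance unitaryGroup_borelSpace : BorelSpace (Matrix.unitaryGroup n ℂ) := by
  have : BorelSpace (Matrix n n ℂ) := inferInstanceAs (BorelSpace (n → n → ℂ))
  exact Subtype.borelSpace _

/-- The polynomial ring in the formal entries of a matrix (`Sum.inl`) and in the formal complex
conjugates of its entries (`Sum.inr`). -/
abbrev EntryPoly (n : Type*) := MvPolynomial ((n × n) ⊕ (n × n)) ℂ

/-- Evaluation of a polynomial in the entries and their conjugates at a unitary matrix. -/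
noncomputable def evalAt (U : Matrix.unitaryGroup n ℂ) : EntryPoly n →ₐ[ℂ] ℂ :=
  MvPolynomial.aeval (Sum.elim (fun v => (U : Matrix n n ℂ) v.1 v.2)
    (fun v => (starRingEnd ℂ) ((U : Matrix n n ℂ) v.1 v.2)))

lemma continuous_entry (i j : n) :
    Continuous fun U : Matrix.unitaryGroup n ℂ => (U : Matrix n n ℂ) i j := by
  have : Continuous fun M : Matrix n n ℂ => M i j := by fun_prop
  exact this.comp continuous_subtype_val

lemma continuous_evalAt (f : EntryPoly n) :
    Continuous fun U : Matrix.unitaryGroup n ℂ => evalAt U f := by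
  induction f using MvPolynomial.induction_on with
  | C a => simpa [evalAt] using continuous_const
  | add p q hp hq => simp only [map_add]; exact hp.add hq
  | mul_X p v hp =>
    simp only [map_mul]
    refine hp.mul ?_
    rcases v with ⟨i, j⟩ | ⟨i, j⟩
    · simpa [evalAt] using continuous_entry i j
    · simp only [evalAt, MvPolynomial.aeval_X, Sum.elim_inr]
      exact Complex.continuous_conj.comp (continuous_entry i j)

lemma integrable_evalAt (μ : Measure (Matrix.unitaryGroup n ℂ)) [IsProbabilityMeasure μ]
    (f : EntryPoly n) : Integrable (fun U => evalAt U f) μ := by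
  refine (continuous_evalAt f).integrable_of_hasCompactSupport ?_
  exact HasCompactSupport.of_compactSpace _

/-- Expectation of a polynomial in the entries and their conjugates, as a linear functional. -/
noncomputable def expect (μ : Measure (Matrix.unitaryGroup n ℂ)) [IsProbabilityMeasure μ] :
    EntryPoly n →ₗ[ℂ] ℂ where
  toFun f := ∫ U, evalAt U f ∂μ
  map_add' f g := by
    simpa only [map_add] using integral_add (integrable_evalAt μ f) (integrable_evalAt μ g)
  map_smul' c f := by
    simp only [map_smul, RingHom.id_apply, smul_eq_mul]
    exact integral_const_mul c _

/-- If a one-parameter family of measure-preserving maps moves the entries with velocity given by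
a derivation `D`, then `D f` has mean zero: differentiate `𝔼[f ∘ T t] = 𝔼[f]` at `t = 0`. -/
lemma expect_derivation_eq_zero (μ : Measure (Matrix.unitaryGroup n ℂ)) [IsProbabilityMeasure μ]
    (T : ℝ → Matrix.unitaryGroup n ℂ → Matrix.unitaryGroup n ℂ)
    (hT : ∀ t, MeasurePreserving (T t) μ μ)
    (D : Derivation ℂ (EntryPoly n) (EntryPoly n))
    (hX : ∀ U t v, HasDerivAt (fun s => evalAt (T s U) (MvPolynomial.X v))
      (evalAt (T t U) (D (MvPolynomial.X v))) t)
    (f : EntryPoly n) : expect μ (D f) = 0 := by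
  have hf : ∀ U t, HasDerivAt (fun s => evalAt (T s U) f) (evalAt (T t U) (D f)) t := by
    intro U t
    induction f using MvPolynomial.induction_on with
    | C a => simpa [evalAt] using hasDerivAt_const t a
    | add p q hp hq => simp only [map_add]; exact hp.add hq
    | mul_X p v hp =>
      simp only [map_mul, Derivation.leibniz, map_add, smul_eq_mul]
      refine (hp.mul (hX U t v)).congr_deriv ?_
      ring
  have hconst : ∀ (g : EntryPoly n) t, ∫ U, evalAt (T t U) g ∂μ = expect μ g := by
    intro g t
    have h := (hT t).map_eq
    have h2 := integral_map (μ := μ) (hT t).measurable.aemeasurable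
      (f := fun U => evalAt U g) (continuous_evalAt g).aestronglyMeasurable
    rw [h] at h2
    exact h2.symm
  have hmeas : ∀ (g : EntryPoly n) t, AEStronglyMeasurable (fun U => evalAt (T t U) g) μ :=
    fun g t => ((continuous_evalAt g).measurable.comp (hT t).measurable).aestronglyMeasurable
  obtain ⟨C, hC⟩ : ∃ C, ∀ U : Matrix.unitaryGroup n ℂ, ‖evalAt U (D f)‖ ≤ C := by
    obtain ⟨C, hC⟩ := isCompact_univ.exists_bound_of_continuousOn
      (continuous_evalAt (D f)).continuousOn
    exact ⟨C, fun U => hC U (Set.mem_univ _)⟩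
  have key := hasDerivAt_integral_of_dominated_loc_of_deriv_le (μ := μ) (𝕜 := ℝ)
    (F := fun t U => evalAt (T t U) f) (F' := fun t U => evalAt (T t U) (D f)) (x₀ := 0)
    (s := Set.univ) (bound := fun _ => C) Filter.univ_mem
    (Filter.Eventually.of_forall fun t => hmeas f t)
    ((hT 0).integrable_comp_of_integrable (integrable_evalAt μ f)) (hmeas _ 0)
    (Filter.Eventually.of_forall fun U t _ => hC _) (integrable_const C)
    (Filter.Eventually.of_forall fun U t _ => hf U t)
  simp only [hconst] at key
  exact key.2.unique (hasDerivAt_const _ _)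

omit [Fintype n] [DecidableEq n] in
/-- The exponential flow of a skew-adjoint element of a finite-dimensional star algebra, tested
against linear functionals; no topology on the algebra appears in the conclusion. -/
lemma exists_unitary_flow_of_skewAdjoint {B : Type*} [NormedRing B] [NormedAlgebra ℝ B]
    [FiniteDimensional ℝ B] [StarRing B] [StarModule ℝ B] (A : B) (hA : star A = -A) :
    ∃ V : ℝ → B, (∀ t, V t ∈ unitary B) ∧ ∀ (L : B →ₗ[ℝ] ℂ) t,
      HasDerivAt (fun s => L (V s)) (L (A * V t)) t ∧
      HasDerivAt (fun s => L (V s)) (L (V t * A)) t := by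
  let : NormedAlgebra ℚ B := NormedAlgebra.restrictScalars ℚ ℝ _
  have : CompleteSpace B := FiniteDimensional.complete ℝ _
  have : ContinuousStar B :=
    ⟨((starLinearEquiv ℝ : B ≃ₗ⋆[ℝ] B).toLinearMap :
      B →ₗ[ℝ] B).continuous_of_finiteDimensional⟩
  refine ⟨fun t => NormedSpace.exp (t • A), fun t => ?_, fun L t => ?_⟩
  · refine NormedSpace.exp_mem_unitary_of_mem_skewAdjoint ?_
    rw [skewAdjoint.mem_iff, star_smul, hA]
    simp
  · exact ⟨(LinearMap.toContinuousLinearMap L).hasFDerivAt.comp_hasDerivAt t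
      (hasDerivAt_exp_smul_const' A t),
      (LinearMap.toContinuousLinearMap L).hasFDerivAt.comp_hasDerivAt t
      (hasDerivAt_exp_smul_const A t)⟩

/-- Every skew-Hermitian matrix `A` generates a one-parameter family `V` of unitary matrices
with entrywise velocity `A V = V A`. -/
lemma exists_unitary_flow (A : Matrix n n ℂ) (hA : Aᴴ = -A) :
    ∃ V : ℝ → Matrix.unitaryGroup n ℂ, ∀ t i j,
      HasDerivAt (fun s => (V s : Matrix n n ℂ) i j) ((A * (V t : Matrix n n ℂ)) i j) t ∧
      HasDerivAt (fun s => (V s : Matrix n n ℂ) i j) (((V t : Matrix n n ℂ) * A) i j) t := by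
  let : NormedRing (Matrix n n ℂ) := Matrix.linftyOpNormedRing
  let : NormedAlgebra ℝ (Matrix n n ℂ) := Matrix.linftyOpNormedAlgebra
  obtain ⟨V, hu, hV⟩ := exists_unitary_flow_of_skewAdjoint A hA
  exact ⟨fun t => ⟨V t, hu t⟩, fun t i j => hV (Matrix.entryLinearMap ℝ ℂ i j) t⟩

/-- The derivation induced by the velocity `U ↦ A * U`, extended complex-linearly in `A`. -/
noncomputable def leftDer (A : Matrix n n ℂ) : Derivation ℂ (EntryPoly n) (EntryPoly n) :=
  MvPolynomial.mkDerivation ℂ (Sum.elim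
    (fun v => ∑ j, A v.1 j • MvPolynomial.X (Sum.inl (j, v.2)))
    (fun v => -∑ j, A j v.1 • MvPolynomial.X (Sum.inr (j, v.2))))

/-- The derivation induced by the velocity `U ↦ U * A`, extended complex-linearly in `A`. -/
noncomputable def rightDer (A : Matrix n n ℂ) : Derivation ℂ (EntryPoly n) (EntryPoly n) :=
  MvPolynomial.mkDerivation ℂ (Sum.elim
    (fun v => ∑ j, A j v.2 • MvPolynomial.X (Sum.inl (v.1, j)))
    (fun v => -∑ j, A v.2 j • MvPolynomial.X (Sum.inr (v.1, j))))

omit [Fintype n] [DecidableEq n] in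
/-- A complex-linear functional that vanishes on skew-Hermitian matrices is zero, since these span
all matrices over `ℂ`. -/
lemma eq_zero_of_skew (φ : Matrix n n ℂ →ₗ[ℂ] ℂ)
    (h : ∀ A : Matrix n n ℂ, Aᴴ = -A → φ A = 0) (A : Matrix n n ℂ) : φ A = 0 := by
  have h1 := h (A - Aᴴ) (by simp)
  have h2 := h (Complex.I • (A + Aᴴ)) (by simp [add_comm])
  have h3 : φ A = (1 / 2 : ℂ) * (φ (A - Aᴴ) - Complex.I * φ (Complex.I • (A + Aᴴ))) := by
    simp only [map_sub, map_add, map_smul, smul_eq_mul]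
    linear_combination (1 / 2 : ℂ) * (φ A + φ Aᴴ) * Complex.I_sq
  rw [h3, h1, h2]; ring

omit [DecidableEq n] in
lemma leftDer_add (A B : Matrix n n ℂ) : leftDer (A + B) = leftDer A + leftDer B := by
  refine MvPolynomial.derivation_ext fun v => ?_
  rcases v with v | v
  · simp [leftDer, MvPolynomial.mkDerivation_X, add_smul, Finset.sum_add_distrib]
  · simp only [leftDer, MvPolynomial.mkDerivation_X, Sum.elim_inr, Matrix.add_apply, add_smul,
      Finset.sum_add_distrib, neg_add, Derivation.add_apply]

omit [DecidableEq n] in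
lemma leftDer_smul (c : ℂ) (A : Matrix n n ℂ) : leftDer (c • A) = c • leftDer A := by
  refine MvPolynomial.derivation_ext fun v => ?_
  rcases v with v | v <;>
    simp [leftDer, MvPolynomial.mkDerivation_X, mul_smul, Finset.smul_sum]

omit [DecidableEq n] in
lemma rightDer_add (A B : Matrix n n ℂ) : rightDer (A + B) = rightDer A + rightDer B := by
  refine MvPolynomial.derivation_ext fun v => ?_
  rcases v with v | v
  · simp [rightDer, MvPolynomial.mkDerivation_X, add_smul, Finset.sum_add_distrib]
  · simp only [rightDer, MvPolynomial.mkDerivation_X, Sum.elim_inr, Matrix.add_apply, add_smul,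
      Finset.sum_add_distrib, neg_add, Derivation.add_apply]

omit [DecidableEq n] in
lemma rightDer_smul (c : ℂ) (A : Matrix n n ℂ) : rightDer (c • A) = c • rightDer A := by
  refine MvPolynomial.derivation_ext fun v => ?_
  rcases v with v | v <;>
    simp [rightDer, MvPolynomial.mkDerivation_X, mul_smul, Finset.smul_sum]

omit [Fintype n] [DecidableEq n] in
lemma conj_entry_of_skew {A : Matrix n n ℂ} (hA : Aᴴ = -A) (i j : n) :
    (starRingEnd ℂ) (A i j) = -A j i := by
  simpa using congrFun (congrFun hA j) i

variable (μ : Measure (Matrix.unitaryGroup n ℂ)) [μ.IsHaarMeasure] [IsProbabilityMeasure μ]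

/-- Infinitesimal left invariance of Haar measure. -/
lemma expect_leftDer (A : Matrix n n ℂ) (f : EntryPoly n) : expect μ (leftDer A f) = 0 := by
  refine eq_zero_of_skew
    { toFun := fun A => expect μ (leftDer A f)
      map_add' := fun A B => by simp [leftDer_add]
      map_smul' := fun c A => by simp [leftDer_smul] } (fun A hA => ?_) A
  obtain ⟨V, hV⟩ := exists_unitary_flow A hA
  have hd : ∀ (U : Matrix.unitaryGroup n ℂ) t i c,
      HasDerivAt (fun s => ((V s * U : Matrix.unitaryGroup n ℂ) : Matrix n n ℂ) i c)
        (∑ j, A i j * ((V t * U : Matrix.unitaryGroup n ℂ) : Matrix n n ℂ) j c) t := by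
    intro U t i c
    have h1 : HasDerivAt (fun s => ∑ j, (V s : Matrix n n ℂ) i j * (U : Matrix n n ℂ) j c)
        (∑ j, (A * (V t : Matrix n n ℂ)) i j * (U : Matrix n n ℂ) j c) t :=
      HasDerivAt.fun_sum fun j _ => (hV t i j).1.mul_const _
    have h2 : (∑ j, (A * (V t : Matrix n n ℂ)) i j * (U : Matrix n n ℂ) j c) =
        ∑ j, A i j * ((V t * U : Matrix.unitaryGroup n ℂ) : Matrix n n ℂ) j c := by
      change (A * (V t : Matrix n n ℂ) * (U : Matrix n n ℂ)) i c =
        (A * ((V t : Matrix n n ℂ) * (U : Matrix n n ℂ))) i c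
      rw [Matrix.mul_assoc]
    rw [h2] at h1
    exact h1
  refine expect_derivation_eq_zero μ (fun t U => V t * U)
    (fun t => measurePreserving_mul_left μ (V t)) (leftDer A) (fun U t v => ?_) f
  rcases v with ⟨i, c⟩ | ⟨i, c⟩
  · simpa [leftDer, evalAt, MvPolynomial.mkDerivation_X] using hd U t i c
  · have h := (hd U t i c).star
    simp only [← starRingEnd_apply, map_sum, map_mul, conj_entry_of_skew hA] at h
    simpa [leftDer, evalAt, MvPolynomial.mkDerivation_X] using h

/-- Infinitesimal right invariance of Haar measure, which holds because the unitary group is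
compact and hence unimodular. -/
lemma expect_rightDer (A : Matrix n n ℂ) (f : EntryPoly n) : expect μ (rightDer A f) = 0 := by
  refine eq_zero_of_skew
    { toFun := fun A => expect μ (rightDer A f)
      map_add' := fun A B => by simp [rightDer_add]
      map_smul' := fun c A => by simp [rightDer_smul] } (fun A hA => ?_) A
  obtain ⟨V, hV⟩ := exists_unitary_flow A hA
  have hd : ∀ (U : Matrix.unitaryGroup n ℂ) t i c,
      HasDerivAt (fun s => ((U * V s : Matrix.unitaryGroup n ℂ) : Matrix n n ℂ) i c)
        (∑ j, A j c * ((U * V t : Matrix.unitaryGroup n ℂ) : Matrix n n ℂ) i j) t := by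
    intro U t i c
    have h1 : HasDerivAt (fun s => ∑ j, (U : Matrix n n ℂ) i j * (V s : Matrix n n ℂ) j c)
        (∑ j, (U : Matrix n n ℂ) i j * ((V t : Matrix n n ℂ) * A) j c) t :=
      HasDerivAt.fun_sum fun j _ => (hV t j c).2.const_mul _
    have h2 : (∑ j, (U : Matrix n n ℂ) i j * ((V t : Matrix n n ℂ) * A) j c) =
        ∑ j, A j c * ((U * V t : Matrix.unitaryGroup n ℂ) : Matrix n n ℂ) i j := by
      simp only [mul_comm (A _ c)]
      change ((U : Matrix n n ℂ) * ((V t : Matrix n n ℂ) * A)) i c =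
        (((U : Matrix n n ℂ) * (V t : Matrix n n ℂ)) * A) i c
      rw [Matrix.mul_assoc]
    rw [h2] at h1
    exact h1
  have hT : ∀ g : Matrix.unitaryGroup n ℂ, MeasurePreserving (fun U => U * g) μ μ := by
    intro g
    have hm : Measurable fun U : Matrix.unitaryGroup n ℂ => U * g :=
      (continuous_mul_const g).measurable
    have : (Measure.map (fun U => U * g) μ).IsHaarMeasure := Measure.isHaarMeasure_map_mul_right μ g
    have : IsProbabilityMeasure (Measure.map (fun U => U * g) μ) :=
      Measure.isProbabilityMeasure_map hm.aemeasurable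
    exact ⟨hm, Measure.isHaarMeasure_eq_of_isProbabilityMeasure _ _⟩
  refine expect_derivation_eq_zero μ (fun t U => U * V t)
    (fun t => hT (V t)) (rightDer A) (fun U t v => ?_) f
  rcases v with ⟨i, c⟩ | ⟨i, c⟩
  · simpa [rightDer, evalAt, MvPolynomial.mkDerivation_X] using hd U t i c
  · have h := (hd U t i c).star
    simp only [← starRingEnd_apply, map_sum, map_mul, conj_entry_of_skew hA] at h
    simpa [rightDer, evalAt, MvPolynomial.mkDerivation_X] using h

end Analytic

/-! ### Derivations applied to matrices, and sums over matrix units -/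

section MatrixDerivations

variable {R l m p : Type*} [CommRing R] [Algebra ℂ R]

lemma map_derivation_mul [Fintype m] (D : Derivation ℂ R R) (A : Matrix l m R)
    (B : Matrix m p R) : (A * B).map D = A.map D * B + A * B.map D := by
  ext i j
  simp only [Matrix.map_apply, Matrix.mul_apply, Matrix.add_apply, map_sum, Derivation.leibniz,
    smul_eq_mul, ← Finset.sum_add_distrib]
  exact Finset.sum_congr rfl fun _ _ => by ring

lemma derivation_trace [Fintype m] (D : Derivation ℂ R R) (A : Matrix m m R) :
    D A.trace = (A.map D).trace := by
  simp [Matrix.trace]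

lemma algHom_trace {S : Type*} [CommRing S] [Algebra ℂ S] [Fintype m] (φ : R →ₐ[ℂ] S)
    (A : Matrix m m R) : φ A.trace = (A.map φ).trace := by
  simp [Matrix.trace]

variable [Fintype l] [Fintype m] [DecidableEq l] [DecidableEq m]

omit [Algebra ℂ R] in
lemma sum_single_mul (M : Matrix m m R) :
    ∑ a : l, ∑ k : m, (Matrix.single a k (1 : R) * M) a k = Fintype.card l * M.trace := by
  simp [Matrix.trace]

omit [Algebra ℂ R] in
lemma sum_mul_single (M : Matrix l l R) :
    ∑ a : l, ∑ k : m, (M * Matrix.single a k (1 : R)) a k = Fintype.card m * M.trace := by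
  simp [Matrix.trace, Finset.mul_sum]

omit [Algebra ℂ R] in
lemma sum_mul_single_mul (M : Matrix l l R) (M' : Matrix m m R) :
    ∑ a : l, ∑ k : m, (M * Matrix.single a k (1 : R) * M') a k = M.trace * M'.trace := by
  simp only [Matrix.trace, Finset.sum_mul_sum, Matrix.diag_apply]
  refine Finset.sum_congr rfl fun a _ => Finset.sum_congr rfl fun k _ => ?_
  rw [Matrix.mul_assoc, Matrix.mul_apply, Finset.sum_eq_single a]
  · simp
  · intro b _ hb
    simp [hb]
  · simp

omit [Algebra ℂ R] [DecidableEq l] [DecidableEq m] in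
lemma sum_entry_mul (B : Matrix m l R) (A : Matrix l m R) :
    ∑ a, ∑ k, B k a * A a k = (A * B).trace := by
  simp [Matrix.trace, Matrix.mul_apply, mul_comm]

end MatrixDerivations

/-! ### The columns as rectangular matrices -/

section Columns

variable {d₁ d₂ : ℕ}

/-- The `c`-th column of the formal unitary, reshaped as a `d₁ × d₂` matrix. -/
noncomputable def colX (c : Fin (d₁ * d₂)) :
    Matrix (Fin d₁) (Fin d₂) (EntryPoly (Fin (d₁ * d₂))) :=
  Matrix.of fun a k => MvPolynomial.X (Sum.inl (finProdFinEquiv (a, k), c))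

/-- The formal conjugate transpose of `colX c`. -/
noncomputable def colY (c : Fin (d₁ * d₂)) :
    Matrix (Fin d₂) (Fin d₁) (EntryPoly (Fin (d₁ * d₂))) :=
  Matrix.of fun k a => MvPolynomial.X (Sum.inr (finProdFinEquiv (a, k), c))

lemma sum_finProd {M : Type*} [AddCommMonoid M] (g : Fin (d₁ * d₂) → M) :
    ∑ i, g i = ∑ a : Fin d₁, ∑ k : Fin d₂, g (finProdFinEquiv (a, k)) := by
  rw [← Fintype.sum_prod_type', ← finProdFinEquiv.sum_comp]

/-! ### Evaluation at a unitary matrix -/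

/-- Columns of a unitary matrix are unit vectors: `Tr ρ_c = 1`. -/
lemma evalAt_mul_trace (U : Matrix.unitaryGroup (Fin (d₁ * d₂)) ℂ) (c : Fin (d₁ * d₂)) :
    evalAt U (colX c * colY c).trace = 1 := by
  have h := congrFun (congrFun (Matrix.mem_unitaryGroup_iff'.mp U.2) c) c
  rw [Matrix.mul_apply, sum_finProd] at h
  simpa [Matrix.trace, Matrix.mul_apply, colX, colY, evalAt, Matrix.star_apply, mul_comm] using h

lemma evalAt_orthogonal_rows (U : Matrix.unitaryGroup (Fin (d₁ * d₂)) ℂ) (a b : Fin d₁)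
    (k l : Fin d₂) :
    ∑ c, (colX c).map (evalAt U) a k * (colY c).map (evalAt U) l b =
      if a = b ∧ k = l then 1 else 0 := by
  have h := congrFun (congrFun (Matrix.mem_unitaryGroup_iff.mp U.2)
    (finProdFinEquiv (a, k))) (finProdFinEquiv (b, l))
  rw [Matrix.mul_apply, Matrix.one_apply] at h
  simpa [colX, colY, evalAt, Matrix.star_apply, Prod.ext_iff] using h

/-- Completeness of the columns, after partial trace over the second factor. -/
lemma sum_colX_mul_colY (U : Matrix.unitaryGroup (Fin (d₁ * d₂)) ℂ) :
    ∑ c, (colX c).map (evalAt U) * (colY c).map (evalAt U) = (d₂ : ℂ) • 1 := by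
  ext a b
  simp only [Matrix.sum_apply, Matrix.mul_apply]
  rw [Finset.sum_comm]
  simp only [evalAt_orthogonal_rows]
  by_cases h : a = b <;> simp [h]

/-- Completeness of the columns, after partial trace over the first factor. -/
lemma sum_colY_mul_colX (U : Matrix.unitaryGroup (Fin (d₁ * d₂)) ℂ) :
    ∑ c, (colY c).map (evalAt U) * (colX c).map (evalAt U) = (d₁ : ℂ) • 1 := by
  ext k l
  simp only [Matrix.sum_apply, Matrix.mul_apply]
  rw [Finset.sum_comm]
  simp only [mul_comm ((colY _).map _ _ _), evalAt_orthogonal_rows]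
  by_cases h : k = l
  · simp [h]
  · simp [h, Ne.symm h]

/-! ### The right-rotation derivations -/

lemma colX_map_rightDer (c d e : Fin (d₁ * d₂)) :
    (colX e).map (rightDer (Matrix.single c d 1)) =
      if e = d then colX c else (0 : Matrix (Fin d₁) (Fin d₂) _) := by
  ext1 a k
  rcases eq_or_ne e d with rfl | h
  · simp [colX, rightDer, MvPolynomial.mkDerivation_X, Matrix.single_apply]
  · simp [colX, rightDer, MvPolynomial.mkDerivation_X, Matrix.single_apply, h, h.symm]

lemma colY_map_rightDer (c d e : Fin (d₁ * d₂)) :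
    (colY e).map (rightDer (Matrix.single c d 1)) =
      if e = c then -colY d else (0 : Matrix (Fin d₂) (Fin d₁) _) := by
  ext1 a k
  rcases eq_or_ne e c with rfl | h
  · simp [colY, rightDer, MvPolynomial.mkDerivation_X, Matrix.single_apply]
  · simp [colY, rightDer, MvPolynomial.mkDerivation_X, Matrix.single_apply, h, h.symm]

/-! ### Integration by parts on the sphere -/

/-- The derivation `g ↦ r ∂g/∂xᵢ - x̄ᵢ (ē g)`, where `x` is the `c`-th column, `r = |x|²` and `ē`
is the Euler operator in the conjugate variables (on polynomials in column `c` only). -/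
noncomputable def sphereDer (c i : Fin (d₁ * d₂)) :
    Derivation ℂ (EntryPoly (Fin (d₁ * d₂))) (EntryPoly (Fin (d₁ * d₂))) :=
  ∑ j, (MvPolynomial.X (Sum.inr (j, c)) : EntryPoly (Fin (d₁ * d₂))) •
    leftDer (Matrix.single i j 1)

lemma sphereDer_apply (c i : Fin (d₁ * d₂)) (g : EntryPoly (Fin (d₁ * d₂))) :
    sphereDer c i g =
      ∑ j, MvPolynomial.X (Sum.inr (j, c)) * leftDer (Matrix.single i j 1) g := by
  have h := map_sum (Derivation.coeFnAddMonoidHom (R := ℂ) (A := EntryPoly (Fin (d₁ * d₂)))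
    (M := EntryPoly (Fin (d₁ * d₂)))) (fun j =>
      (MvPolynomial.X (Sum.inr (j, c)) : EntryPoly (Fin (d₁ * d₂))) •
        leftDer (Matrix.single i j 1)) Finset.univ
  have h2 := congrFun h g
  rw [Finset.sum_apply] at h2
  exact h2

lemma colX_map_sphereDer (c : Fin (d₁ * d₂)) (a : Fin d₁) (k : Fin d₂) :
    (colX c).map (sphereDer c (finProdFinEquiv (a, k))) =
      (colX c * colY c).trace • Matrix.single a k (1 : EntryPoly (Fin (d₁ * d₂))) := by
  have hr : (colX c * colY c).trace = ∑ j, (MvPolynomial.X (Sum.inr (j, c)) :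
      EntryPoly (Fin (d₁ * d₂))) * MvPolynomial.X (Sum.inl (j, c)) := by
    rw [sum_finProd, ← sum_entry_mul]; rfl
  rw [hr]
  ext1 b l
  by_cases h : a = b ∧ k = l
  · simp [colX, sphereDer_apply, leftDer, MvPolynomial.mkDerivation_X, Matrix.single_apply, h]
  · simp [colX, sphereDer_apply, leftDer, MvPolynomial.mkDerivation_X, Matrix.single_apply, h,
      Prod.ext_iff]

lemma colY_map_sphereDer (c : Fin (d₁ * d₂)) (a : Fin d₁) (k : Fin d₂) :
    (colY c).map (sphereDer c (finProdFinEquiv (a, k))) = -(colY c k a) • colY c := by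
  ext1 l b
  simp [colY, sphereDer_apply, leftDer, MvPolynomial.mkDerivation_X, Matrix.single_apply, mul_comm,
    ite_and]

variable (μ : Measure (Matrix.unitaryGroup (Fin (d₁ * d₂)) ℂ)) [μ.IsHaarMeasure]
  [IsProbabilityMeasure μ]

/-- Left invariance applied to `∑ⱼ leftDer Eᵢⱼ (x̄ⱼ g)`: the derivative of `g` gives `sphereDer`,
and the derivatives of the factors `x̄ⱼ` each give `-x̄ᵢ`. -/
lemma expect_sphereDer (c i : Fin (d₁ * d₂)) (g : EntryPoly (Fin (d₁ * d₂))) :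
    expect μ (sphereDer c i g) =
      ((d₁ * d₂ : ℕ) : ℂ) * expect μ (MvPolynomial.X (Sum.inr (i, c)) * g) := by
  have h : ∑ j, leftDer (Matrix.single i j 1) (MvPolynomial.X (Sum.inr (j, c)) * g) =
      sphereDer c i g - ((d₁ * d₂ : ℕ) : ℂ) • (MvPolynomial.X (Sum.inr (i, c)) * g) := by
    have h1 : ∀ j, leftDer (Matrix.single i j 1) (MvPolynomial.X (Sum.inr (j, c))) =
        -(MvPolynomial.X (Sum.inr (i, c)) : EntryPoly (Fin (d₁ * d₂))) := by
      intro j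
      simp [leftDer, MvPolynomial.mkDerivation_X, Matrix.single_apply]
    simp only [Derivation.leibniz, h1, Finset.sum_add_distrib, sphereDer_apply]
    simp only [Finset.sum_const, Finset.card_univ, Fintype.card_fin, smul_eq_mul,
      sub_eq_add_neg, Nat.cast_smul_eq_nsmul, mul_comm g]
    simp
  have h2 := congrArg (expect μ) h
  simp only [map_sum, expect_leftDer, Finset.sum_const_zero, map_sub, map_smul,
    smul_eq_mul] at h2
  linear_combination -h2

/-- Integration by parts on the unit sphere, for a matrix-valued polynomial `G`. -/
lemma expect_trace_mul_colY (c : Fin (d₁ * d₂))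
    (G : Matrix (Fin d₁) (Fin d₂) (EntryPoly (Fin (d₁ * d₂)))) :
    ((d₁ * d₂ : ℕ) : ℂ) * expect μ (G * colY c).trace =
      expect μ (∑ a, ∑ k, G.map (sphereDer c (finProdFinEquiv (a, k))) a k) := by
  rw [← sum_entry_mul]
  simp only [map_sum, Matrix.map_apply, expect_sphereDer, Finset.mul_sum]
  rfl

omit [μ.IsHaarMeasure] in
/-- `expect` only sees values on the unitary group; the unitarity relations enter through this. -/
lemma expect_congr {f g : EntryPoly (Fin (d₁ * d₂))} (h : ∀ U, evalAt U f = evalAt U g) :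
    expect μ f = expect μ g :=
  integral_congr_ae (Filter.Eventually.of_forall h)

end Columns

/-! ### Moments of the purity of one column -/

section Moments

variable {d₁ d₂ : ℕ} (c : Fin (d₁ * d₂))

local notation "X" => colX c
local notation "Y" => colY c
local notation "𝒟" a "," k => sphereDer c (finProdFinEquiv (a, k))
local notation "𝒮" a "," k => Matrix.single a k (1 : EntryPoly (Fin (d₁ * d₂)))

/-- The sum arising from integration by parts in `E[Tr ρ²]`. -/
lemma sum_sphereDer_cubic :
    ∑ a, ∑ k, (X * Y * X).map (𝒟 a, k) a k =
      (X * Y).trace * (d₁ * (Y * X).trace) - (X * Y * (X * Y)).trace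
        + (X * Y).trace * (d₂ * (X * Y).trace) := by
  have h : ∀ a k, (X * Y * X).map (𝒟 a, k) a k =
      (X * Y).trace * ((𝒮 a, k) * (Y * X)) a k - Y k a * (X * Y * X) a k
        + (X * Y).trace * (X * Y * (𝒮 a, k)) a k := by
    intro a k
    simp only [map_derivation_mul, colX_map_sphereDer, colY_map_sphereDer, Matrix.mul_add,
      Matrix.smul_mul, Matrix.mul_smul, Matrix.add_apply, Matrix.smul_apply, smul_eq_mul,
      Matrix.mul_assoc]
    ring
  simp only [h, Finset.sum_add_distrib, Finset.sum_sub_distrib, ← Finset.mul_sum,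
    sum_single_mul, sum_mul_single, sum_entry_mul, Fintype.card_fin]
  simp only [Matrix.mul_assoc]

/-- The sum arising from integration by parts in `E[Tr ρ³]`. -/
lemma sum_sphereDer_quintic :
    ∑ a, ∑ k, (X * Y * X * Y * X).map (𝒟 a, k) a k =
      (X * Y).trace * (d₁ * (Y * X * (Y * X)).trace) - 2 * (X * Y * (X * Y) * (X * Y)).trace
        + (X * Y).trace * ((X * Y).trace * (Y * X).trace)
        + (X * Y).trace * (d₂ * (X * Y * (X * Y)).trace) := by
  have h : ∀ a k, (X * Y * X * Y * X).map (𝒟 a, k) a k =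
      (X * Y).trace * ((𝒮 a, k) * (Y * X * (Y * X))) a k
        - 2 * (Y k a * (X * Y * X * Y * X) a k)
        + (X * Y).trace * (X * Y * (𝒮 a, k) * (Y * X)) a k
        + (X * Y).trace * (X * Y * (X * Y) * (𝒮 a, k)) a k := by
    intro a k
    simp only [map_derivation_mul, colX_map_sphereDer, colY_map_sphereDer, Matrix.mul_add,
      Matrix.smul_mul, Matrix.mul_smul, Matrix.add_apply, Matrix.smul_apply, smul_eq_mul,
      Matrix.mul_assoc]
    ring
  simp only [h, Finset.sum_add_distrib, Finset.sum_sub_distrib, ← Finset.mul_sum,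
    sum_single_mul, sum_mul_single, sum_mul_single_mul, sum_entry_mul, Fintype.card_fin]
  simp only [Matrix.mul_assoc]

lemma sphereDer_purity (a : Fin d₁) (k : Fin d₂) :
    (𝒟 a, k) (X * Y * (X * Y)).trace =
      2 * ((X * Y).trace * (Y * X * Y) k a) - 2 * (Y k a * (X * Y * (X * Y)).trace) := by
  have hs : ((𝒮 a, k) * (Y * X * Y)).trace = (Y * X * Y) k a := by
    rw [Matrix.trace_mul_comm]
    simp [Matrix.trace_mul_single]
  have hc : (X * Y * ((𝒮 a, k) * Y)).trace
      = ((𝒮 a, k) * (Y * X * Y)).trace := by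
    rw [Matrix.trace_mul_comm]
    simp only [Matrix.mul_assoc]
  rw [derivation_trace]
  simp only [map_derivation_mul, colX_map_sphereDer, colY_map_sphereDer, Matrix.add_mul,
    Matrix.mul_add, Matrix.smul_mul, Matrix.mul_smul, Matrix.trace_add, Matrix.trace_smul,
    smul_eq_mul, hc]
  rw [Matrix.mul_assoc (𝒮 a, k), ← Matrix.mul_assoc Y X Y, hs]
  ring

/-- The sum arising from integration by parts in `E[(Tr ρ²)²]`. -/
lemma sum_sphereDer_purity_cubic :
    ∑ a, ∑ k, ((X * Y * (X * Y)).trace • (X * Y * X)).map (𝒟 a, k) a k =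
      (X * Y * (X * Y)).trace * ∑ a, ∑ k, (X * Y * X).map (𝒟 a, k) a k
        + 2 * ((X * Y).trace * (X * Y * (X * Y) * (X * Y)).trace)
        - 2 * ((X * Y * (X * Y)).trace * (X * Y * (X * Y)).trace) := by
  have h : ∀ a k, ((X * Y * (X * Y)).trace • (X * Y * X)).map (𝒟 a, k) a k =
      (X * Y * (X * Y)).trace * (X * Y * X).map (𝒟 a, k) a k
        + 2 * ((X * Y).trace * ((Y * X * Y) k a * (X * Y * X) a k))
        - 2 * ((X * Y * (X * Y)).trace * (Y k a * (X * Y * X) a k)) := by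
    intro a k
    simp only [Matrix.map_apply, Matrix.smul_apply, smul_eq_mul, Derivation.leibniz,
      sphereDer_purity]
    ring
  simp only [h, Finset.sum_add_distrib, Finset.sum_sub_distrib, ← Finset.mul_sum, sum_entry_mul]
  simp only [Matrix.mul_assoc]

variable (μ : Measure (Matrix.unitaryGroup (Fin (d₁ * d₂)) ℂ)) [μ.IsHaarMeasure]
  [IsProbabilityMeasure μ]

omit [μ.IsHaarMeasure] in
lemma expect_one : expect μ 1 = 1 := by
  simp [expect]

lemma expect_purity :
    ((d₁ * d₂ : ℂ) + 1) * expect μ (X * Y * (X * Y)).trace = d₁ + d₂ := by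
  have h := expect_trace_mul_colY μ c (X * Y * X)
  rw [sum_sphereDer_cubic, Matrix.mul_assoc (X * Y)] at h
  replace h := h.trans (expect_congr μ (g := ((d₁ : ℂ) + d₂) • 1 - (X * Y * (X * Y)).trace) (by
    intro U
    simp only [map_sub, map_add, map_mul, map_smul, map_natCast, map_one,
      Matrix.trace_mul_comm Y X, evalAt_mul_trace, smul_eq_mul]
    ring))
  simp only [map_sub, map_smul, expect_one, smul_eq_mul, Nat.cast_mul] at h
  linear_combination h

lemma expect_trace_cube :
    ((d₁ * d₂ : ℂ) + 2) * expect μ (X * Y * (X * Y) * (X * Y)).trace =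
      (d₁ + d₂) * expect μ (X * Y * (X * Y)).trace + 1 := by
  have h := expect_trace_mul_colY μ c (X * Y * X * Y * X)
  have hG : X * Y * X * Y * X * Y = X * Y * (X * Y) * (X * Y) := by simp only [Matrix.mul_assoc]
  have hσ : (Y * X * (Y * X)).trace = (X * Y * (X * Y)).trace := by
    rw [Matrix.mul_assoc, Matrix.trace_mul_comm]; simp only [Matrix.mul_assoc]
  rw [sum_sphereDer_quintic, hG, hσ] at h
  replace h := h.trans (expect_congr μ (g := ((d₁ : ℂ) + d₂) • (X * Y * (X * Y)).trace
    - (2 : ℂ) • (X * Y * (X * Y) * (X * Y)).trace + 1) (by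
    intro U
    simp only [map_sub, map_add, map_mul, map_smul, map_natCast, map_ofNat, map_one,
      Matrix.trace_mul_comm Y X, evalAt_mul_trace, smul_eq_mul]
    ring))
  simp only [map_sub, map_add, map_smul, expect_one, smul_eq_mul, Nat.cast_mul] at h
  linear_combination h

lemma expect_purity_sq :
    ((d₁ * d₂ : ℂ) + 3) * expect μ ((X * Y * (X * Y)).trace * (X * Y * (X * Y)).trace) =
      (d₁ + d₂) * expect μ (X * Y * (X * Y)).trace
        + 2 * expect μ (X * Y * (X * Y) * (X * Y)).trace := by
  have h := expect_trace_mul_colY μ c ((X * Y * (X * Y)).trace • (X * Y * X))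
  rw [sum_sphereDer_purity_cubic, sum_sphereDer_cubic, Matrix.smul_mul, Matrix.trace_smul,
    Matrix.mul_assoc (X * Y), smul_eq_mul] at h
  replace h := h.trans (expect_congr μ (g := ((d₁ : ℂ) + d₂) • (X * Y * (X * Y)).trace
    + (2 : ℂ) • (X * Y * (X * Y) * (X * Y)).trace
    - (3 : ℂ) • ((X * Y * (X * Y)).trace * (X * Y * (X * Y)).trace)) (by
    intro U
    simp only [map_sub, map_add, map_mul, map_smul, map_natCast, map_ofNat,
      Matrix.trace_mul_comm Y X, evalAt_mul_trace, smul_eq_mul]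
    ring))
  simp only [map_sub, map_add, map_smul, smul_eq_mul, Nat.cast_mul] at h
  linear_combination h

end Moments

/-! ### Correlations between columns -/

section Mixed

variable {d₁ d₂ : ℕ}

/-- The purity `Tr ρ_z²` as a polynomial. -/
noncomputable def purity (z : Fin (d₁ * d₂)) : EntryPoly (Fin (d₁ * d₂)) :=
  (colX z * colY z * (colX z * colY z)).trace

/-- Rotations among the columns other than `z` leave the purity of column `z` unchanged. -/
lemma rightDer_purity {z c d : Fin (d₁ * d₂)} (hc : c ≠ z) (hd : d ≠ z) :
    rightDer (Matrix.single c d 1) (purity z) = 0 := by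
  rw [purity, derivation_trace]
  simp [map_derivation_mul, colX_map_rightDer, colY_map_rightDer, hc.symm, hd.symm]

variable (μ : Measure (Matrix.unitaryGroup (Fin (d₁ * d₂)) ℂ)) [μ.IsHaarMeasure]
  [IsProbabilityMeasure μ]

/-- Right rotations of the columns other than `z` preserve expectations weighted by the purity of
column `z`. -/
lemma expect_purity_mul_rightDer {z c d : Fin (d₁ * d₂)} (hc : c ≠ z) (hd : d ≠ z)
    (f : EntryPoly (Fin (d₁ * d₂))) :
    expect μ (purity z * rightDer (Matrix.single c d 1) f) = 0 := by
  have h := expect_rightDer μ (Matrix.single c d 1) (purity z * f)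
  simpa [Derivation.leibniz, rightDer_purity hc hd] using h

omit [μ.IsHaarMeasure] in
/-- Completeness `∑ₑ ρₑ = d₂ • 1`, tested against `g` and `M`. -/
lemma sum_expect_rho (g : EntryPoly (Fin (d₁ * d₂)))
    (M : Matrix (Fin d₁) (Fin d₁) (EntryPoly (Fin (d₁ * d₂)))) :
    ∑ e, expect μ (g * (colX e * colY e * M).trace) = d₂ * expect μ (g * M.trace) := by
  rw [← map_sum, ← smul_eq_mul (d₂ : ℂ), ← map_smul]
  refine expect_congr μ fun U => ?_
  have h := congrArg (fun A => (A * M.map (evalAt U)).trace) (sum_colX_mul_colY U)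
  simp only [Matrix.sum_mul, Matrix.trace_sum, Matrix.smul_mul, Matrix.one_mul,
    Matrix.trace_smul, smul_eq_mul] at h
  simp only [map_sum, map_mul, map_smul, algHom_trace, Matrix.map_mul, smul_eq_mul,
    ← Finset.mul_sum, h]
  ring

omit [μ.IsHaarMeasure] in
/-- Completeness `∑ₑ σₑ = d₁ • 1`, tested against `g` and `M`. -/
lemma sum_expect_sigma (g : EntryPoly (Fin (d₁ * d₂)))
    (M : Matrix (Fin d₂) (Fin d₂) (EntryPoly (Fin (d₁ * d₂)))) :
    ∑ e, expect μ (g * (colY e * colX e * M).trace) = d₁ * expect μ (g * M.trace) := by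
  rw [← map_sum, ← smul_eq_mul (d₁ : ℂ), ← map_smul]
  refine expect_congr μ fun U => ?_
  have h := congrArg (fun A => (A * M.map (evalAt U)).trace) (sum_colY_mul_colX U)
  simp only [Matrix.sum_mul, Matrix.trace_sum, Matrix.smul_mul, Matrix.one_mul,
    Matrix.trace_smul, smul_eq_mul] at h
  simp only [map_sum, map_mul, map_smul, algHom_trace, Matrix.map_mul, smul_eq_mul,
    ← Finset.mul_sum, h]
  ring

omit [μ.IsHaarMeasure] in
lemma expect_mul_trace_rho (g : EntryPoly (Fin (d₁ * d₂))) (c : Fin (d₁ * d₂)) :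
    expect μ (g * (colX c * colY c).trace) = expect μ g :=
  expect_congr μ fun U => by rw [map_mul, evalAt_mul_trace, mul_one]

omit [μ.IsHaarMeasure] in
lemma expect_mul_trace_sigma (g : EntryPoly (Fin (d₁ * d₂))) (c : Fin (d₁ * d₂)) :
    expect μ (g * (colY c * colX c).trace) = expect μ g := by
  rw [Matrix.trace_mul_comm, expect_mul_trace_rho]

/-- A sum over all columns, split into the column `z` and the others. -/
lemma sum_split {z : Fin (d₁ * d₂)} {F : Fin (d₁ * d₂) → ℂ} {A : ℂ}
    (h : ∀ e, e ≠ z → F e = A) : ∑ e, F e = F z + ((d₁ * d₂ : ℂ) - 1) * A := by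
  have hpos : 1 ≤ d₁ * d₂ := Nat.one_le_iff_ne_zero.mpr fun h0 => (h0 ▸ z).elim0
  rw [← Finset.add_sum_erase _ _ (Finset.mem_univ z),
    Finset.sum_congr rfl fun e he => h e (Finset.ne_of_mem_erase he)]
  simp [Finset.card_erase_of_mem, Nat.cast_sub hpos]

/-- By right invariance, `E[p Tr ρₑ ρ_z]` is the same for all `e ≠ z`. -/
lemma expect_rho_rho_const {z v e : Fin (d₁ * d₂)} (hv : v ≠ z) (he : e ≠ z) :
    expect μ (purity z * (colX e * colY e * (colX z * colY z)).trace) =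
      expect μ (purity z * (colX v * colY v * (colX z * colY z)).trace) := by
  rcases eq_or_ne e v with rfl | hev
  · rfl
  have h := expect_purity_mul_rightDer μ hv he (colX e * colY v * (colX z * colY z)).trace
  rw [derivation_trace] at h
  simp only [map_derivation_mul, colX_map_rightDer, colY_map_rightDer, hv.symm, he.symm,
    if_true, if_false, Matrix.mul_zero, Matrix.zero_mul, add_zero, Matrix.add_mul,
    Matrix.mul_neg, Matrix.neg_mul, Matrix.trace_add, Matrix.trace_neg, mul_add, mul_neg,
    map_add, map_neg] at h
  linear_combination -h

/-- By right invariance, `E[p Tr σₑ σ_z]` is the same for all `e ≠ z`. -/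
lemma expect_sigma_sigma_const {z v e : Fin (d₁ * d₂)} (hv : v ≠ z) (he : e ≠ z) :
    expect μ (purity z * (colY e * colX e * (colY z * colX z)).trace) =
      expect μ (purity z * (colY v * colX v * (colY z * colX z)).trace) := by
  rcases eq_or_ne e v with rfl | hev
  · rfl
  have h := expect_purity_mul_rightDer μ hv he (colY v * colX e * (colY z * colX z)).trace
  rw [derivation_trace] at h
  simp only [map_derivation_mul, colX_map_rightDer, colY_map_rightDer, hv.symm, he.symm,
    if_true, if_false, Matrix.mul_zero, Matrix.zero_mul, add_zero, Matrix.add_mul,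
    Matrix.neg_mul, Matrix.trace_add, Matrix.trace_neg, mul_add, mul_neg,
    map_add, map_neg] at h
  linear_combination -h

/-- Right rotations between the columns `e` and `u` compare `E[p Tr ρₑ ρ_v]` with `E[p Tr ρ_u ρ_v]`;
when `e = v` the second factor is rotated too, which contributes `E[p Tr σ_u σ_v]`. -/
lemma expect_rho_rho {z u v e : Fin (d₁ * d₂)} (hu : u ≠ z) (he : e ≠ z) (huv : u ≠ v) :
    expect μ (purity z * (colX e * colY e * (colX v * colY v)).trace) =
      expect μ (purity z * (colX u * colY u * (colX v * colY v)).trace) +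
        if e = v then expect μ (purity z * (colY u * colX u * (colY v * colX v)).trace)
        else 0 := by
  rcases eq_or_ne e u with rfl | heu
  · simp [huv]
  have h := expect_purity_mul_rightDer μ hu he (colX e * colY u * (colX v * colY v)).trace
  rw [derivation_trace] at h
  have hc : (colX v * colY u * (colX u * colY v)).trace =
      (colY u * colX u * (colY v * colX v)).trace := by
    rw [Matrix.mul_assoc, Matrix.trace_mul_comm]; simp only [Matrix.mul_assoc]
  rcases eq_or_ne e v with rfl | hev
  · simp only [map_derivation_mul, colX_map_rightDer, colY_map_rightDer, heu,
      if_true, if_false, Matrix.mul_zero, add_zero, Matrix.add_mul,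
      Matrix.mul_neg, Matrix.neg_mul, Matrix.trace_add, Matrix.trace_neg, mul_add, mul_neg,
      map_add, map_neg, hc] at h
    rw [if_pos rfl]
    linear_combination -h
  · simp only [map_derivation_mul, colX_map_rightDer, colY_map_rightDer, hev.symm, huv.symm,
      if_true, if_false, Matrix.mul_zero, Matrix.zero_mul, add_zero, Matrix.add_mul,
      Matrix.mul_neg, Matrix.neg_mul, Matrix.trace_add, Matrix.trace_neg, mul_add, mul_neg,
      map_add, map_neg] at h
    rw [if_neg hev]
    linear_combination -h

/-- The counterpart of `expect_rho_rho` for the other partial trace. -/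
lemma expect_sigma_sigma {z u v e : Fin (d₁ * d₂)} (hu : u ≠ z) (he : e ≠ z) (huv : u ≠ v) :
    expect μ (purity z * (colY e * colX e * (colY v * colX v)).trace) =
      expect μ (purity z * (colY u * colX u * (colY v * colX v)).trace) +
        if e = v then expect μ (purity z * (colX u * colY u * (colX v * colY v)).trace)
        else 0 := by
  rcases eq_or_ne e u with rfl | heu
  · simp [huv]
  have h := expect_purity_mul_rightDer μ hu he (colY u * colX e * (colY v * colX v)).trace
  rw [derivation_trace] at h
  have hc : (colY u * colX v * (colY v * colX u)).trace =
      (colX u * colY u * (colX v * colY v)).trace := by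
    rw [← Matrix.mul_assoc, Matrix.trace_mul_comm]; simp only [Matrix.mul_assoc]
  rcases eq_or_ne e v with rfl | hev
  · simp only [map_derivation_mul, colX_map_rightDer, colY_map_rightDer, heu,
      if_true, if_false, Matrix.zero_mul, zero_add, Matrix.add_mul,
      Matrix.neg_mul, Matrix.trace_add, Matrix.trace_neg, mul_add, mul_neg,
      map_add, map_neg, hc] at h
    rw [if_pos rfl]
    linear_combination -h
  · simp only [map_derivation_mul, colX_map_rightDer, colY_map_rightDer, hev.symm, huv.symm,
      if_true, if_false, Matrix.mul_zero, Matrix.zero_mul, add_zero, Matrix.add_mul,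
      Matrix.neg_mul, Matrix.trace_add, Matrix.trace_neg, mul_add, mul_neg,
      map_add, map_neg] at h
    rw [if_neg hev]
    linear_combination -h

/-- A sum over all columns, split into the column `z`, the column `v` and the others. -/
lemma sum_split_ite {z v : Fin (d₁ * d₂)} (hv : v ≠ z) {F : Fin (d₁ * d₂) → ℂ} {A C : ℂ}
    (h : ∀ e, e ≠ z → F e = A + if e = v then C else 0) :
    ∑ e, F e = F z + ((d₁ * d₂ : ℂ) - 1) * A + C := by
  have h1 : ∑ e, (F e - if e = v then C else 0) =
      (F z - if z = v then C else 0) + ((d₁ * d₂ : ℂ) - 1) * A :=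
    sum_split (F := fun e => F e - if e = v then C else 0) fun e he => by rw [h e he]; ring
  simp only [Finset.sum_sub_distrib, hv.symm, if_false, Finset.sum_ite_eq', Finset.mem_univ,
    if_true] at h1
  linear_combination h1

/-- The linear relation that determines the mixed correlation from the moments of the purity. -/
lemma expect_mixed {z u v : Fin (d₁ * d₂)} (hu : u ≠ z) (hv : v ≠ z) (huv : u ≠ v) :
    (d₁ * d₂ : ℂ) * (d₁ * d₂ - 2) * (d₁ * d₂ - 1) *
        expect μ (purity z * (colX u * colY u * (colX v * colY v)).trace) =
      (d₁ * d₂ - 1) * (d₁ * d₂ - 2) * d₂ * expect μ (purity z)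
        + (d₁ * d₂ - 1) * expect μ (purity z * purity z)
        - (d₁ * d₂ - 2) * d₁ * expect μ (purity z) - expect μ (purity z * purity z) := by
  have hσ : (colY z * colX z * (colY z * colX z)).trace = purity z := by
    rw [purity, Matrix.mul_assoc, Matrix.trace_mul_comm]; simp only [Matrix.mul_assoc]
  have hK := (sum_split fun e he => expect_rho_rho_const μ hv he).symm.trans
    (sum_expect_rho μ (purity z) (colX z * colY z))
  have hK' := (sum_split fun e he => expect_sigma_sigma_const μ hv he).symm.trans
    (sum_expect_sigma μ (purity z) (colY z * colX z))
  have hA := (sum_split_ite hv fun e he => expect_rho_rho μ hu he huv).symm.trans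
    (sum_expect_rho μ (purity z) (colX v * colY v))
  have hC := (sum_split_ite hv fun e he => expect_sigma_sigma μ hu he huv).symm.trans
    (sum_expect_sigma μ (purity z) (colY v * colX v))
  rw [expect_mul_trace_rho] at hK hA
  rw [expect_mul_trace_sigma] at hK' hC
  rw [hσ] at hK'
  rw [Matrix.trace_mul_comm (colX z * colY z) (colX v * colY v)] at hA
  rw [Matrix.trace_mul_comm (colY z * colX z) (colY v * colX v)] at hC
  rw [← purity] at hK
  -- `hA` and `hC` form a linear system in `E[p Tr ρ_u ρ_v]` and `E[p Tr σ_u σ_v]`; the last is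
  -- eliminated, and the remaining two relations remove the correlations with column `z` itself.
  linear_combination ((d₁ * d₂ : ℂ) - 1) ^ 2 * hA - (d₁ * d₂ - 1) * hC -
    (d₁ * d₂ - 1) * hK + hK'

end Mixed

/-! ### The closed formula -/

/-- `E[Tr(ρ₀²) · Tr(ρ₁ρ₂)]` for a Haar-random unitary of size `d₁d₂ ≥ 3`. -/
theorem stmt5 (d₁ d₂ : ℕ) (hd₁ : 0 < d₁) (hd₂ : 0 < d₂) (hd : 3 ≤ d₁ * d₂)
    (μ : Measure (Matrix.unitaryGroup (Fin (d₁ * d₂)) ℂ))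
    [μ.IsHaarMeasure] [IsProbabilityMeasure μ] :
    let i0 : Fin (d₁ * d₂) := ⟨0, by omega⟩
    let i1 : Fin (d₁ * d₂) := ⟨1, by omega⟩
    let i2 : Fin (d₁ * d₂) := ⟨2, by omega⟩
    ∫ U, Matrix.trace (rho U i0 * rho U i0) * Matrix.trace (rho U i1 * rho U i2) ∂μ =
      (((d₂ : ℂ) ^ 2 - 1) * ((d₁ : ℂ) * ((d₁ : ℂ) + (d₂ : ℂ)) * ((d₁ : ℂ) * (d₂ : ℂ) * ((d₁ : ℂ) * (d₂ : ℂ) + 4) + 2) - 2)) / ((d₁ : ℂ) * (d₂ : ℂ) * ((d₁ : ℂ) * (d₂ : ℂ) - 1) * ((d₁ : ℂ) * (d₂ : ℂ) + 1) * ((d₁ : ℂ) * (d₂ : ℂ) + 2) * ((d₁ : ℂ) * (d₂ : ℂ) + 3)) := by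
  intro i0 i1 i2
  have h10 : i1 ≠ i0 := by simp [i0, i1]
  have h20 : i2 ≠ i0 := by simp [i0, i2]
  have h12 : i1 ≠ i2 := by simp [i1, i2]
  have hint : ∫ U, Matrix.trace (rho U i0 * rho U i0) * Matrix.trace (rho U i1 * rho U i2) ∂μ =
      expect μ (purity i0 * (colX i1 * colY i1 * (colX i2 * colY i2)).trace) := by
    refine integral_congr_ae (Filter.Eventually.of_forall fun U => ?_)
    have hρ : ∀ c, (colX c * colY c).map (evalAt U) = rho U c := by
      intro c
      ext a b
      simp [rho, Matrix.mul_apply, colX, colY, evalAt]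
    have hρρ : ∀ c e, (colX c * colY c * (colX e * colY e)).map (evalAt U) = rho U c * rho U e :=
      fun c e => by rw [Matrix.map_mul, hρ, hρ]
    simp only [purity, map_mul, algHom_trace, hρρ]
  rw [hint]
  have hM := expect_mixed μ h10 h20 h12
  have h1 := expect_purity i0 μ
  have h2 := expect_trace_cube i0 μ
  have h3 := expect_purity_sq i0 μ
  rw [← purity] at h1 h2 h3
  -- The natural-number hypothesis `3 ≤ d₁ d₂` makes every factor below nonzero.
  obtain ⟨m, hm⟩ := Nat.exists_eq_add_of_le hd
  have hN : (d₁ : ℂ) * d₂ = 3 + m := by exact_mod_cast hm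
  have hne : ∀ j : ℕ, (m : ℂ) + (j + 1) ≠ 0 := fun j => by exact_mod_cast Nat.succ_ne_zero (m + j)
  have n0 : (d₁ : ℂ) * d₂ ≠ 0 := by rw [hN]; convert hne 2 using 1; push_cast; ring
  have n1 : (d₁ : ℂ) * d₂ - 1 ≠ 0 := by rw [hN]; convert hne 1 using 1; push_cast; ring
  have n2 : (d₁ : ℂ) * d₂ - 2 ≠ 0 := by rw [hN]; convert hne 0 using 1; push_cast; ring
  have p1 : (d₁ : ℂ) * d₂ + 1 ≠ 0 := by rw [hN]; convert hne 3 using 1; push_cast; ring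
  have p2 : (d₁ : ℂ) * d₂ + 2 ≠ 0 := by rw [hN]; convert hne 4 using 1; push_cast; ring
  have p3 : (d₁ : ℂ) * d₂ + 3 ≠ 0 := by rw [hN]; convert hne 5 using 1; push_cast; ring
  rw [eq_div_iff (by simp only [ne_eq, mul_eq_zero, not_or] at *; tauto)]
  generalize expect μ (purity i0 * (colX i1 * colY i1 * (colX i2 * colY i2)).trace) = A at *
  generalize expect μ (purity i0 * purity i0) = E2 at *
  generalize expect μ (purity i0) = E1 at *
  generalize expect μ _ = Q at *
  generalize (d₁ : ℂ) = a at *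
  generalize (d₂ : ℂ) = b at *
  -- The relation `hM` carries the factor `d₁d₂ - 2`, which the closed formula does not.
  apply mul_left_cancel₀ n2
  linear_combination (a * b + 1) * (a * b + 2) * (a * b + 3) * hM +
    (a * b - 2) * ((a * b - 1) * b - a) * (a * b + 2) * (a * b + 3) * h1 +
    (a * b - 2) * ((a * b + 1) * (a * b + 2) * h3 + 2 * (a * b + 1) * h2 +
      (a + b) * (a * b + 4) * h1)
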